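/- arXiv:1804.08441 — 2 statements merged into one kernel-verified Lean document; each statement's English description precedes it below -/
import Mathlib

section
/- For every real number m ≥ 1, let N(m) denote the number of pairs (n, s) with n ∈ ℕ and s a subset of {0, 1, …, n−3} (s = ∅ when n < 3) such that λⁿ − Σ_{i∈s} λⁱ ≤ m. Then (1/8)·m^{log 2 / log λ} ≤ N(m) ≤ 32·m^{log 2 / log λ}. -/
/-!
Removing from `xⁿ` any set of powers `xⁱ` with `i < n - d` costs at most `xⁿ / (x ^ d * (x - 1))`,
by the geometric series. So when `x ^ d * (x - 1)` exceeds `1`, the weight of a pair `(n, s)` is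
`xⁿ` up to a factor `x ^ e` with `e` fixed. If `x ^ k ≤ m < x ^ (k + 1)`, the pairs of weight at
most `m` therefore include all those with `n = k`, of which there are `2 ^ (k - d)`, and all have
`n ≤ k + e`, which leaves at most `2 ^ (k + e)` of them. Finally `m ^ logb x 2` lies between
`2 ^ k` and `2 ^ (k + 1)`.
-/

section Counting

open Finset

/-- The pairs `(n, s)` with `n < K` and `s ⊆ {0, …, n - d - 1}`, where `s = ∅` if `n ≤ d`. -/
def gappedPairsBelow (d K : ℕ) : Finset (ℕ × Finset ℕ) :=
  (range K).biUnion fun n ↦ {n} ×ˢ (range (n - d)).powerset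

theorem mem_gappedPairsBelow {d K : ℕ} {p : ℕ × Finset ℕ} :
    p ∈ gappedPairsBelow d K ↔ p.1 < K ∧ p.2 ⊆ range (p.1 - d) := by
  obtain ⟨n, s⟩ := p
  simp only [gappedPairsBelow, mem_biUnion, mem_product, mem_singleton, mem_powerset, mem_range]
  exact ⟨fun ⟨_, hK, rfl, hs⟩ ↦ ⟨hK, hs⟩, fun ⟨hK, hs⟩ ↦ ⟨n, hK, rfl, hs⟩⟩

theorem sum_two_pow_sub_le_two_pow {d : ℕ} (hd : 1 ≤ d) (K : ℕ) :
    ∑ n ∈ range (K + 1), 2 ^ (n - d) ≤ 2 ^ K := by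
  induction K with
  | zero => simp
  | succ K ih =>
    have hlast : 2 ^ (K + 1 - d) ≤ 2 ^ K := Nat.pow_le_pow_right two_pos (by lia)
    rw [sum_range_succ, pow_succ]
    lia

theorem card_gappedPairsBelow_le {d : ℕ} (hd : 1 ≤ d) (K : ℕ) :
    #(gappedPairsBelow d (K + 1)) ≤ 2 ^ K :=
  calc #(gappedPairsBelow d (K + 1))
      ≤ ∑ n ∈ range (K + 1), #({n} ×ˢ (range (n - d)).powerset) := card_biUnion_le
    _ = ∑ n ∈ range (K + 1), 2 ^ (n - d) := by simp
    _ ≤ 2 ^ K := sum_two_pow_sub_le_two_pow hd K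

variable {R : Type*} [CommRing R]

/-- The weight `xⁿ - ∑ i ∈ s, xⁱ` of the quasi-standard monomial `r_{n-3} v_n` encoded by the pair
`(n, s)`, with an arbitrary base `x` in place of `λ`. -/
def monomialWeight (x : R) (p : ℕ × Finset ℕ) : R :=
  x ^ p.1 - ∑ i ∈ p.2, x ^ i

variable [LinearOrder R]

/-- The pairs `(n, s)` with `s ⊆ {0, …, n - d - 1}` whose weight is at most `m`; the quasi-standard
monomials of the first type are the case `d = 2`. -/
def gappedPairsOfWeightLE (x : R) (d : ℕ) (m : R) : Set (ℕ × Finset ℕ) :=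
  {p | p.2 ⊆ range (p.1 - d) ∧ monomialWeight x p ≤ m}

variable [IsStrictOrderedRing R] {x m : R} {d e k : ℕ}

theorem mul_sum_pow_le_pow (hx : 1 ≤ x) {n : ℕ} {s : Finset ℕ} (hs : s ⊆ range (n - d)) :
    x ^ d * (x - 1) * ∑ i ∈ s, x ^ i ≤ x ^ n := by
  have hx₀ : 0 ≤ x := zero_le_one.trans hx
  obtain rfl | ⟨i, hi⟩ := s.eq_empty_or_nonempty
  · simpa using pow_nonneg hx₀ n
  have hdn : d ≤ n := by
    have := mem_range.mp (hs hi)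
    lia
  have hsum : ∑ i ∈ s, x ^ i ≤ ∑ i ∈ range (n - d), x ^ i :=
    sum_le_sum_of_subset_of_nonneg hs fun i _ _ ↦ pow_nonneg hx₀ i
  have hcoef : 0 ≤ x ^ d * (x - 1) := mul_nonneg (pow_nonneg hx₀ d) (sub_nonneg.mpr hx)
  calc x ^ d * (x - 1) * ∑ i ∈ s, x ^ i
      ≤ x ^ d * (x - 1) * ∑ i ∈ range (n - d), x ^ i := mul_le_mul_of_nonneg_left hsum hcoef
    _ = x ^ d * (x ^ (n - d) - 1) := by rw [mul_assoc, mul_geom_sum]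
    _ ≤ x ^ d * x ^ (n - d) := mul_le_mul_of_nonneg_left (sub_le_self _ zero_le_one) (by positivity)
    _ = x ^ n := pow_mul_pow_sub x hdn

theorem pow_le_pow_mul_monomialWeight (hx : 1 < x)
    (he : x ^ d * (x - 1) ≤ x ^ e * (x ^ d * (x - 1) - 1)) {p : ℕ × Finset ℕ}
    (hp : p.2 ⊆ range (p.1 - d)) : x ^ p.1 ≤ x ^ e * monomialWeight x p := by
  have hx₀ : 0 < x := zero_lt_one.trans hx
  have hsum := mul_sum_pow_le_pow hx.le hp
  have hcoef : 0 < x ^ d * (x - 1) := mul_pos (pow_pos hx₀ d) (sub_pos.mpr hx)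
  set a := x ^ d * (x - 1)
  have hweight : (a - 1) * x ^ p.1 ≤ a * monomialWeight x p := by
    rw [monomialWeight]
    linarith
  refine le_of_mul_le_mul_left ?_ hcoef
  calc a * x ^ p.1
      ≤ x ^ e * (a - 1) * x ^ p.1 := by gcongr
    _ = x ^ e * ((a - 1) * x ^ p.1) := mul_assoc ..
    _ ≤ x ^ e * (a * monomialWeight x p) := by gcongr
    _ = a * (x ^ e * monomialWeight x p) := mul_left_comm ..

theorem gappedPairsOfWeightLE_subset_gappedPairsBelow (hx : 1 < x)
    (he : x ^ d * (x - 1) ≤ x ^ e * (x ^ d * (x - 1) - 1)) (hm : m < x ^ (k + 1)) :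
    gappedPairsOfWeightLE x d m ⊆ gappedPairsBelow d (k + e + 1) := by
  rintro p ⟨hp, hpm⟩
  have : 0 < x := zero_lt_one.trans hx
  have hpow : x ^ p.1 < x ^ (k + e + 1) :=
    calc x ^ p.1
        ≤ x ^ e * monomialWeight x p := pow_le_pow_mul_monomialWeight hx he hp
      _ < x ^ e * x ^ (k + 1) := by gcongr; exact hpm.trans_lt hm
      _ = x ^ (k + e + 1) := by ring
  exact mem_gappedPairsBelow.mpr ⟨(pow_lt_pow_iff_right₀ hx).mp hpow, hp⟩

theorem ncard_gappedPairsOfWeightLE_le (hx : 1 < x) (hd : 1 ≤ d)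
    (he : x ^ d * (x - 1) ≤ x ^ e * (x ^ d * (x - 1) - 1)) (hm : m < x ^ (k + 1)) :
    (gappedPairsOfWeightLE x d m).ncard ≤ 2 ^ (k + e) :=
  calc (gappedPairsOfWeightLE x d m).ncard
      ≤ (gappedPairsBelow d (k + e + 1) : Set (ℕ × Finset ℕ)).ncard :=
        Set.ncard_le_ncard (gappedPairsOfWeightLE_subset_gappedPairsBelow hx he hm)
    _ = #(gappedPairsBelow d (k + e + 1)) := Set.ncard_coe_finset _
    _ ≤ 2 ^ (k + e) := card_gappedPairsBelow_le hd _

theorem singleton_product_powerset_subset_gappedPairsOfWeightLE (hx : 0 ≤ x) (hm : x ^ k ≤ m) :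
    (({k} ×ˢ (range (k - d)).powerset : Finset (ℕ × Finset ℕ)) : Set (ℕ × Finset ℕ)) ⊆
      gappedPairsOfWeightLE x d m := by
  rintro ⟨n, s⟩ hp
  simp only [mem_coe, mem_product, mem_singleton, mem_powerset] at hp
  obtain ⟨rfl, hs⟩ := hp
  exact ⟨hs, (sub_le_self _ (sum_nonneg fun i _ ↦ pow_nonneg hx i)).trans hm⟩

theorem two_pow_sub_le_ncard_gappedPairsOfWeightLE (hx : 0 ≤ x) (hm : x ^ k ≤ m)
    (hfin : (gappedPairsOfWeightLE x d m).Finite) :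
    2 ^ (k - d) ≤ (gappedPairsOfWeightLE x d m).ncard :=
  calc 2 ^ (k - d) = #({k} ×ˢ (range (k - d)).powerset : Finset (ℕ × Finset ℕ)) := by simp
    _ = Set.ncard _ := (Set.ncard_coe_finset _).symm
    _ ≤ (gappedPairsOfWeightLE x d m).ncard :=
        Set.ncard_le_ncard (singleton_product_powerset_subset_gappedPairsOfWeightLE hx hm) hfin

end Counting

section Growth

open Real

theorem pow_rpow_logb {a b : ℝ} (hb : 0 < b) (hb₁ : b ≠ 1) (ha : 0 < a) (n : ℕ) :
    (b ^ n) ^ logb b a = a ^ n := by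
  rw [← rpow_pow_comm hb.le, rpow_logb hb hb₁ ha]

theorem ncard_gappedPairsOfWeightLE_bounds {x m : ℝ} {d e : ℕ} (hx : 1 < x) (hd : 1 ≤ d)
    (he : x ^ d * (x - 1) ≤ x ^ e * (x ^ d * (x - 1) - 1)) (hm : 1 ≤ m) :
    m ^ logb x 2 ≤ 2 ^ (d + 1) * ((gappedPairsOfWeightLE x d m).ncard : ℝ) ∧
      ((gappedPairsOfWeightLE x d m).ncard : ℝ) ≤ 2 ^ e * m ^ logb x 2 := by
  obtain ⟨k, hkm, hmk⟩ := exists_nat_pow_near hm hx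
  have hx₀ : 0 < x := zero_lt_one.trans hx
  have hθ : 0 ≤ logb x 2 := logb_nonneg hx one_le_two
  have hfin : (gappedPairsOfWeightLE x d m).Finite :=
    (Finset.finite_toSet _).subset (gappedPairsOfWeightLE_subset_gappedPairsBelow hx he hmk)
  constructor
  · calc m ^ logb x 2
        ≤ (x ^ (k + 1)) ^ logb x 2 := by gcongr
      _ = 2 ^ (k + 1) := pow_rpow_logb hx₀ hx.ne' two_pos _
      _ ≤ 2 ^ (d + 1 + (k - d)) := pow_le_pow_right₀ one_le_two (by lia)
      _ = 2 ^ (d + 1) * 2 ^ (k - d) := pow_add ..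
      _ ≤ 2 ^ (d + 1) * ((gappedPairsOfWeightLE x d m).ncard : ℝ) := by
          gcongr
          exact_mod_cast two_pow_sub_le_ncard_gappedPairsOfWeightLE hx₀.le hkm hfin
  · calc ((gappedPairsOfWeightLE x d m).ncard : ℝ)
        ≤ 2 ^ (k + e) := by exact_mod_cast ncard_gappedPairsOfWeightLE_le hx hd he hmk
      _ = 2 ^ e * (x ^ k) ^ logb x 2 := by
          rw [pow_rpow_logb hx₀ hx.ne' two_pos, pow_add, mul_comm]
      _ ≤ 2 ^ e * m ^ logb x 2 := by gcongr

end Growth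

-- Equality holds at `x ≈ 1.506`; the bound `1.51` lies between this point and the root `λ`.
theorem sq_mul_sub_one_le_pow_five_mul {x : ℝ} (hx : 1.51 ≤ x) :
    x ^ 2 * (x - 1) ≤ x ^ 5 * (x ^ 2 * (x - 1) - 1) := by
  have hcoef : 1.16 ≤ x ^ 2 * (x - 1) :=
    calc (1.16 : ℝ) ≤ 1.51 ^ 2 * (1.51 - 1) := by norm_num
      _ ≤ x ^ 2 * (x - 1) := by gcongr
  have hpow : 7.8 ≤ x ^ 5 :=
    calc (7.8 : ℝ) ≤ 1.51 ^ 5 := by norm_num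
      _ ≤ x ^ 5 := by gcongr
  calc x ^ 2 * (x - 1) ≤ 7.8 * (x ^ 2 * (x - 1) - 1) := by linarith
    _ ≤ x ^ 5 * (x ^ 2 * (x - 1) - 1) := by
        gcongr
        linarith

theorem le_of_pow_three_sub_self_sub_two_eq_zero {x : ℝ} (hx : x ^ 3 - x - 2 = 0) : 1.51 ≤ x := by
  by_contra! hlt
  -- The quotient of `x ^ 3 - x - 2` by `x - 1.51`; the remainder is negative.
  have hquad : 0 < x ^ 2 + 1.51 * x + 1.2801 := by nlinarith [sq_nonneg (x + 0.755)]
  have hneg : (x - 1.51) * (x ^ 2 + 1.51 * x + 1.2801) < 0 :=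
    mul_neg_of_neg_of_pos (sub_neg.mpr hlt) hquad
  linarith

theorem stmt_13_general (lam : ℝ) (hlam : 1.51 ≤ lam) (m : ℝ) (hm : 1 ≤ m)
    (N : ℕ)
    (hN : N = Nat.card {p : ℕ × Finset ℕ //
        p.2 ⊆ Finset.range (p.1 - 2) ∧ lam ^ p.1 - ∑ i ∈ p.2, lam ^ i ≤ m}) :
    (1 / 8 : ℝ) * m ^ (Real.log 2 / Real.log lam) ≤ (N : ℝ) ∧
    (N : ℝ) ≤ 32 * m ^ (Real.log 2 / Real.log lam) := by
  obtain rfl : N = (gappedPairsOfWeightLE lam 2 m).ncard := hN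
  obtain ⟨hlower, hupper⟩ := ncard_gappedPairsOfWeightLE_bounds (by linarith) one_le_two
    (sq_mul_sub_one_le_pow_five_mul hlam) hm
  rw [Real.log_div_log]
  norm_num only at hlower hupper
  exact ⟨by linarith, hupper⟩

/-- For `m ≥ 1` let `N(m)` be the number of pairs `(n, s)` with `n ∈ ℕ` and
`s ⊆ {0, 1, …, n−3}` (so `s = ∅` when `n < 3`) such that `λⁿ − Σ_{i∈s} λⁱ ≤ m`.
Then `(1/8) m^{log 2 / log λ} ≤ N(m) ≤ 32 m^{log 2 / log λ}`, where `λ` is the real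
root of `t³ − t − 2`. -/
theorem stmt_13 (lam : ℝ) (hlam : lam ^ 3 - lam - 2 = 0) (m : ℝ) (hm : 1 ≤ m)
    (N : ℕ)
    (hN : N = Nat.card {p : ℕ × Finset ℕ //
        p.2 ⊆ Finset.range (p.1 - 2) ∧ lam ^ p.1 - ∑ i ∈ p.2, lam ^ i ≤ m}) :
    (1 / 8 : ℝ) * m ^ (Real.log 2 / Real.log lam) ≤ (N : ℝ) ∧
    (N : ℝ) ≤ 32 * m ^ (Real.log 2 / Real.log lam) :=
  stmt_13_general lam (le_of_pow_three_sub_self_sub_two_eq_zero hlam) m hm N hN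
end

section
/- For every i ≥ 0, the pivot operators satisfy, as equalities of K-linear endomorphisms of the Grassmann algebra Λ: (i) v_i ∘ v_i = x_{i+1} ∘ v_{i+3}; (ii) v_i ∘ v_{i+1} + v_{i+1} ∘ v_i = −x_i ∘ v_{i+3}; (iii) v_i² ∘ v_{i+1} − v_{i+1} ∘ v_i² = −v_{i+3}; (iv) v_i ∘ v_{i+2} + v_{i+2} ∘ v_i = −x_i ∘ x_{i+1} ∘ x_{i+2} ∘ v_{i+5}. -/
/-- The Grassmann algebra `Λ(x_i ∣ i ≥ 0)`: the exterior algebra over `K` of the free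
`K`-module with basis indexed by `ℕ`. -/
noncomputable abbrev GrassmannAlgebra (K : Type*) [Field K] :=
  ExteriorAlgebra K (ℕ →₀ K)

/-- The `i`-th Grassmann generator `x_i ∈ Λ`. -/
noncomputable def grassGen (K : Type*) [Field K] (i : ℕ) : GrassmannAlgebra K :=
  ExteriorAlgebra.ι K (Finsupp.single i 1)

/-- The operator of left multiplication by `x_i` on `Λ`. -/
noncomputable def grassMul (K : Type*) [Field K] (i : ℕ) :
    Module.End K (GrassmannAlgebra K) :=
  LinearMap.mulLeft K (grassGen K i)

/-!
The square of `v_i` is the even operator `u_i = x_{i+1} v_{i+3}`, so that `v_i = d_i + x_i u_i`.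
Every supercommutator of `v_i` with a later `v_j` is reduced to the commutator of `u_i` with `v_j`,
because `d_i` and `x_i` anticommute with `v_j` for `j > i`. This last fact is the only one that is
not formal: the anticommutator of a fixed operator with `v_j` is `x_j x_{j+1}` times the one with
`v_{j+3}`, and on a given vector `v_{j+3k}` vanishes for large `k`.
-/

open Filter

section AnticommutingElements

variable {A : Type*} [Ring A] {a b c t : A}

theorem commute_mul_of_anticommute (hb : a * b + b * a = 0) (hc : a * c + c * a = 0) :
    Commute a (b * c) := by
  rw [commute_iff_eq]
  linear_combination (norm := noncomm_ring) hb * c - b * hc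

theorem anticommutator_mul_mul_of_anticommute (ha : t * a + a * t = 0) (hb : t * b + b * t = 0) :
    t * (a * b * c) + a * b * c * t = a * b * (t * c + c * t) := by
  linear_combination (norm := noncomm_ring) ha * b * c - a * hb * c

theorem add_mul_mul_self_of_commute (ha : a * a = 0) (hb : b * b = 0) (hab : a * b + b * a = 1)
    (hac : Commute a c) (hbc : Commute b c) : (a + b * c) * (a + b * c) = c := by
  calc (a + b * c) * (a + b * c)
      = a * a + (a * b * c + b * (c * a)) + b * (c * b) * c := by noncomm_ring
    _ = a * a + (a * b + b * a) * c + b * b * c * c := by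
      rw [← hac.eq, ← hbc.eq]
      noncomm_ring
    _ = c := by simp only [ha, hb, hab, zero_mul, one_mul, zero_add, add_zero]

end AnticommutingElements

theorem forall_gt_of_eventually_of_add {P : ℕ → Prop} {i p : ℕ} (hp : 0 < p)
    (step : ∀ j, i < j → P (j + p) → P j) (hP : ∀ᶠ j in atTop, P j) : ∀ j, i < j → P j := by
  obtain ⟨n, hn⟩ := eventually_atTop.mp hP
  have descend : ∀ k j, i < j → P (j + k * p) → P j := by
    intro k
    induction k with
    | zero => simp
    | succ k ih =>
      intro j hj hP
      refine step j hj (ih (j + p) (by omega) ?_)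
      rwa [add_assoc, Nat.add_comm p, ← Nat.succ_mul]
  exact fun j hj => descend n j hj (hn _ ((Nat.le_mul_of_pos_right n hp).trans (by omega)))

/-- The canonical anticommutation relations, satisfied by creation operators `x i` and
annihilation operators `d i`. The relations `x i * x i = 0` and `d i * d i = 0` are separate fields
because anticommutation only gives twice them. -/
structure CanonicalAnticommutation {I A : Type*} [Ring A] (x d : I → A) : Prop where
  create_mul_self : ∀ i, x i * x i = 0
  annihilate_mul_self : ∀ i, d i * d i = 0
  create_anticomm : ∀ i j, x i * x j + x j * x i = 0
  annihilate_anticomm : ∀ i j, d i * d j + d j * d i = 0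
  annihilate_create_self : ∀ i, d i * x i + x i * d i = 1
  annihilate_create_of_ne : ∀ i j, i ≠ j → d i * x j + x j * d i = 0

/-- A family of pivot operators `v i = d i + x i * x (i + 1) * v (i + 3)` built from canonically
anticommuting operators on a module. Local finiteness of the family `v` makes it the pointwise
finite sum obtained by unfolding the recursion, rather than an arbitrary solution of it. -/
structure IsPivotFamily {R M : Type*} [Semiring R] [AddCommGroup M] [Module R M]
    (x d v : ℕ → Module.End R M) : Prop extends CanonicalAnticommutation x d where
  recursion : ∀ i, v i = d i + x i * x (i + 1) * v (i + 3)
  eventually_apply_eq_zero : ∀ m, ∀ᶠ j in atTop, v j m = 0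

namespace IsPivotFamily

variable {R M : Type*} [Semiring R] [AddCommGroup M] [Module R M]
  {x d v : ℕ → Module.End R M} (h : IsPivotFamily x d v) {T : Module.End R M} {i j : ℕ}

include h

theorem eq_annihilate_add (i : ℕ) : v i = d i + x i * (x (i + 1) * v (i + 3)) := by
  rw [h.recursion i, mul_assoc]

theorem anticomm_of_forall_gt (hx : ∀ j, i < j → T * x j + x j * T = 0)
    (hd : ∀ j, i < j → T * d j + d j * T = 0) (hij : i < j) : T * v j + v j * T = 0 := by
  have step : ∀ k, i < k →
      T * v k + v k * T = x k * x (k + 1) * (T * v (k + 3) + v (k + 3) * T) := by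
    intro k hk
    rw [← anticommutator_mul_mul_of_anticommute (hx k hk) (hx (k + 1) (by omega)), h.recursion k]
    linear_combination (norm := noncomm_ring) hd k hk
  ext m
  refine forall_gt_of_eventually_of_add (P := fun k => (T * v k + v k * T) m = 0)
    three_pos (fun k hk hP => ?_) ?_ j hij
  · rw [step k hk, Module.End.mul_apply, hP, map_zero]
  · filter_upwards [h.eventually_apply_eq_zero m, h.eventually_apply_eq_zero (T m)] with k hm hTm
    simp only [LinearMap.add_apply, Module.End.mul_apply, hm, hTm, map_zero, add_zero]

theorem create_anticomm_pivot (hij : i < j) : x i * v j + v j * x i = 0 :=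
  h.anticomm_of_forall_gt (fun k _ => h.create_anticomm i k)
    (fun k hk => by rw [add_comm, h.annihilate_create_of_ne k i hk.ne']) hij

theorem annihilate_anticomm_pivot (hij : i < j) : d i * v j + v j * d i = 0 :=
  h.anticomm_of_forall_gt (fun k hk => h.annihilate_create_of_ne i k hk.ne)
    (fun k _ => h.annihilate_anticomm i k) hij

theorem create_commute_create_mul_pivot (i : ℕ) : Commute (x i) (x (i + 1) * v (i + 3)) :=
  commute_mul_of_anticommute (h.create_anticomm i (i + 1)) (h.create_anticomm_pivot (by omega))

theorem annihilate_commute_create_mul_pivot (i : ℕ) : Commute (d i) (x (i + 1) * v (i + 3)) :=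
  commute_mul_of_anticommute (h.annihilate_create_of_ne i (i + 1) (by omega))
    (h.annihilate_anticomm_pivot (by omega))

theorem pivot_mul_self (i : ℕ) : v i * v i = x (i + 1) * v (i + 3) := by
  rw [h.eq_annihilate_add i]
  exact add_mul_mul_self_of_commute (h.annihilate_mul_self i) (h.create_mul_self i)
    (h.annihilate_create_self i) (h.annihilate_commute_create_mul_pivot i)
    (h.create_commute_create_mul_pivot i)

theorem create_mul_pivot_self (i : ℕ) : x i * v i = x i * d i := by
  rw [h.eq_annihilate_add i, mul_add, ← mul_assoc, h.create_mul_self, zero_mul, add_zero]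

theorem pivot_mul_create_self (i : ℕ) : v i * x i = d i * x i := by
  rw [h.eq_annihilate_add i, add_mul, mul_assoc (x i),
    ← (h.create_commute_create_mul_pivot i).eq, ← mul_assoc (x i), h.create_mul_self, zero_mul,
    add_zero]

theorem create_anticomm_pivot_self (i : ℕ) : x i * v i + v i * x i = 1 := by
  rw [h.create_mul_pivot_self, h.pivot_mul_create_self, add_comm, h.annihilate_create_self]

theorem create_mul_pivot_anticomm (hij : i < j) : x i * (v j * v i + v i * v j) = 0 := by
  calc x i * (v j * v i + v i * v j)
      = x i * (d i * v j + v j * d i) := by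
        linear_combination (norm := noncomm_ring)
          h.create_anticomm_pivot hij * (v i - d i) - v j * h.create_mul_pivot_self i
            + h.create_mul_pivot_self i * v j
    _ = 0 := by rw [h.annihilate_anticomm_pivot hij, mul_zero]

theorem pivot_anticomm (hij : i < j) :
    v i * v j + v j * v i = x i * (v i * v i * v j - v j * (v i * v i)) := by
  rw [h.pivot_mul_self, h.eq_annihilate_add i]
  linear_combination (norm := noncomm_ring) h.annihilate_anticomm_pivot hij
    + h.create_anticomm_pivot hij * (x (i + 1) * v (i + 3))

theorem pivot_sq_comm_pivot_succ (i : ℕ) :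
    v i * v i * v (i + 1) - v (i + 1) * (v i * v i) = -v (i + 3) := by
  rw [h.pivot_mul_self]
  linear_combination (norm := noncomm_ring)
    h.create_mul_pivot_anticomm (show i + 1 < i + 3 by omega)
      - h.create_anticomm_pivot_self (i + 1) * v (i + 3)

theorem pivot_anticomm_pivot_succ (i : ℕ) :
    v i * v (i + 1) + v (i + 1) * v i = -(x i * v (i + 3)) := by
  rw [h.pivot_anticomm i.lt_succ_self, h.pivot_sq_comm_pivot_succ, mul_neg]

theorem pivot_sq_comm_pivot_add_two (i : ℕ) :
    v i * v i * v (i + 2) - v (i + 2) * (v i * v i) = -(x (i + 1) * x (i + 2) * v (i + 5)) := by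
  rw [h.pivot_mul_self]
  calc x (i + 1) * v (i + 3) * v (i + 2) - v (i + 2) * (x (i + 1) * v (i + 3))
      = x (i + 1) * (v (i + 2) * v (i + 3) + v (i + 3) * v (i + 2)) := by
        linear_combination (norm := noncomm_ring)
          -(h.create_anticomm_pivot (show i + 1 < i + 2 by omega)) * v (i + 3)
    _ = -(x (i + 1) * x (i + 2) * v (i + 5)) := by
        rw [h.pivot_anticomm_pivot_succ (i + 2), mul_neg, mul_assoc]

theorem pivot_anticomm_pivot_add_two (i : ℕ) :
    v i * v (i + 2) + v (i + 2) * v i = -(x i * x (i + 1) * x (i + 2) * v (i + 5)) := by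
  rw [h.pivot_anticomm (by omega), h.pivot_sq_comm_pivot_add_two, mul_neg]
  simp only [mul_assoc]

end IsPivotFamily

theorem stmt_16_general {R M : Type*} [Semiring R] [AddCommGroup M] [Module R M]
    {x d v : ℕ → Module.End R M} (h : IsPivotFamily x d v) (i : ℕ) :
    v i * v i = x (i + 1) * v (i + 3) ∧
    v i * v (i + 1) + v (i + 1) * v i = -(x i * v (i + 3)) ∧
    (v i * v i) * v (i + 1) - v (i + 1) * (v i * v i) = -(v (i + 3)) ∧
    v i * v (i + 2) + v (i + 2) * v i = -(x i * x (i + 1) * x (i + 2) * v (i + 5)) :=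
  ⟨h.pivot_mul_self i, h.pivot_anticomm_pivot_succ i, h.pivot_sq_comm_pivot_succ i,
    h.pivot_anticomm_pivot_add_two i⟩

section GeneratedAlgebra

variable {R A : Type*} [CommSemiring R]

theorem eventually_mem_adjoin_image_Iio [Semiring A] [Algebra R A] {I : Type*} [Preorder I]
    [NoMaxOrder I] {g : I → A} {a : A} (ha : a ∈ Algebra.adjoin R (Set.range g)) :
    ∀ᶠ n in atTop, a ∈ Algebra.adjoin R (g '' Set.Iio n) := by
  induction ha using Algebra.adjoin_induction with
  | mem a ha =>
    obtain ⟨j, rfl⟩ := ha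
    filter_upwards [eventually_gt_atTop j] with n hn
    exact Algebra.subset_adjoin ⟨j, hn, rfl⟩
  | algebraMap r => exact .of_forall fun n => algebraMap_mem _ r
  | add a b _ _ ha hb => filter_upwards [ha, hb] with n ha hb using add_mem ha hb
  | mul a b _ _ ha hb => filter_upwards [ha, hb] with n ha hb using mul_mem ha hb

theorem eq_mulRight_of_commute_mulLeft [Semiring A] [Algebra R A] {s : Set A}
    (hs : Algebra.adjoin R s = ⊤) {T : Module.End R A}
    (hT : ∀ a ∈ s, Commute T (LinearMap.mulLeft R a)) : T = LinearMap.mulRight R (T 1) := by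
  have adjoin_le : Algebra.adjoin R s ≤
      (Subalgebra.centralizer R {T}).comap (Algebra.lmul R A) :=
    Algebra.adjoin_le fun a ha => by
      rintro _ rfl
      exact (hT a ha).eq
  ext a
  have commute_a : T * Algebra.lmul R A a = Algebra.lmul R A a * T :=
    adjoin_le (hs ▸ Algebra.mem_top) T rfl
  simpa using LinearMap.congr_fun commute_a 1

theorem mul_self_eq_zero_of_commute_anticommutator [Ring A] [Algebra R A] {s : Set A}
    (hs : Algebra.adjoin R s = ⊤) {T : Module.End R A} (hT1 : T 1 = 0)
    (hT : ∀ a ∈ s, Commute T (T * LinearMap.mulLeft R a + LinearMap.mulLeft R a * T)) :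
    T * T = 0 := by
  have hTT : ∀ a ∈ s, Commute (T * T) (LinearMap.mulLeft R a) := fun a ha => by
    rw [commute_iff_eq]
    -- `[T², a] = [T, Ta + aT]`
    linear_combination (norm := noncomm_ring) (hT a ha).eq
  rw [eq_mulRight_of_commute_mulLeft hs hTT, Module.End.mul_apply, hT1, map_zero,
    LinearMap.mulRight_zero_eq_zero]

end GeneratedAlgebra

theorem adjoin_range_exteriorAlgebra_ι_comp {I R M : Type*} [CommRing R] [AddCommGroup M]
    [Module R M] {b : I → M} (hb : Submodule.span R (Set.range b) = ⊤) :
    Algebra.adjoin R (Set.range fun i => ExteriorAlgebra.ι R (b i)) = ⊤ := by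
  rw [← CliffordAlgebra.adjoin_range_ι, ← LinearMap.coe_range, LinearMap.range_eq_map, ← hb,
    Submodule.map_span, Algebra.adjoin_span, ← Set.range_comp]
  rfl

section Grassmann

variable {K : Type*} [Field K] {d v : ℕ → Module.End K (GrassmannAlgebra K)}

theorem adjoin_range_grassGen : Algebra.adjoin K (Set.range (grassGen K)) = ⊤ :=
  adjoin_range_exteriorAlgebra_ι_comp (by
    simpa using (Finsupp.basisSingleOne (R := K) (ι := ℕ)).span_eq)

theorem grassMul_mul_self (i : ℕ) : grassMul K i * grassMul K i = 0 := by
  rw [grassMul, Module.End.mul_eq_comp, ← LinearMap.mulLeft_mul, grassGen,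
    ExteriorAlgebra.ι_sq_zero, LinearMap.mulLeft_zero_eq_zero]

theorem grassMul_anticomm (i j : ℕ) :
    grassMul K i * grassMul K j + grassMul K j * grassMul K i = 0 := by
  ext a
  simp [grassMul, grassGen, ← mul_assoc, ← add_mul, ExteriorAlgebra.ι_add_mul_swap]

theorem canonicalAnticommutation_grassMul
    (hd : ∀ i j, d i * grassMul K j + grassMul K j * d i = if i = j then 1 else 0)
    (hd1 : ∀ i, d i 1 = 0) (hdd : ∀ i j, d i * d j + d j * d i = 0) :
    CanonicalAnticommutation (grassMul K) d where
  create_mul_self := grassMul_mul_self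
  annihilate_mul_self i := by
    refine mul_self_eq_zero_of_commute_anticommutator adjoin_range_grassGen (hd1 i) ?_
    rintro _ ⟨j, rfl⟩
    change Commute (d i) (d i * grassMul K j + grassMul K j * d i)
    rw [hd i j]
    split_ifs
    exacts [Commute.one_right _, Commute.zero_right _]
  create_anticomm := grassMul_anticomm
  annihilate_anticomm := hdd
  annihilate_create_self i := by rw [hd, if_pos rfl]
  annihilate_create_of_ne i j hij := by rw [hd, if_neg hij]

theorem isPivotFamily_grassMul (hcar : CanonicalAnticommutation (grassMul K) d)
    (hv : ∀ i, v i = d i + grassMul K i * grassMul K (i + 1) * v (i + 3))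
    (hv0 : ∀ i, ∀ w ∈ Algebra.adjoin K (grassGen K '' {j | j < i}), v i w = 0) :
    IsPivotFamily (grassMul K) d v where
  toCanonicalAnticommutation := hcar
  recursion := hv
  eventually_apply_eq_zero w := by
    have hw : w ∈ Algebra.adjoin K (Set.range (grassGen K)) :=
      (adjoin_range_grassGen (K := K)) ▸ Algebra.mem_top
    exact (eventually_mem_adjoin_image_Iio hw).mono fun n => hv0 n w

end Grassmann

/-- Basic products of the pivot operators `v_i = ∂_i + x_i x_{i+1} v_{i+3}` acting on
the Grassmann algebra `Λ`: `v_i² = x_{i+1} v_{i+3}`, `[v_i, v_{i+1}] = −x_i v_{i+3}`,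
`[v_i², v_{i+1}] = −v_{i+3}`, `[v_i, v_{i+2}] = −x_i x_{i+1} x_{i+2} v_{i+5}`.
Here `∂_i` is the contraction characterized by `∂_i x_j + x_j ∂_i = δ_{ij}`, `∂_i(1)=0`,
`∂_i ∂_j + ∂_j ∂_i = 0`, and the pivot operators `v_i` are characterized by the
recursion `v_i = ∂_i + x_i x_{i+1} v_{i+3}` together with the fact that `v_i` kills the
subalgebra generated by the `x_j` with `j < i`.  Products in `Module.End` are
compositions of operators. -/
theorem stmt_16 (K : Type*) [Field K]
    (d v : ℕ → Module.End K (GrassmannAlgebra K))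
    (hd : ∀ i j : ℕ, d i * grassMul K j + grassMul K j * d i = if i = j then 1 else 0)
    (hd1 : ∀ i : ℕ, d i (1 : GrassmannAlgebra K) = 0)
    (hdd : ∀ i j : ℕ, d i * d j + d j * d i = 0)
    (hv : ∀ i : ℕ, v i = d i + grassMul K i * grassMul K (i + 1) * v (i + 3))
    (hv0 : ∀ i : ℕ, ∀ w ∈ Algebra.adjoin K (grassGen K '' {j : ℕ | j < i}), v i w = 0) :
    ∀ i : ℕ,
      v i * v i = grassMul K (i + 1) * v (i + 3) ∧
      v i * v (i + 1) + v (i + 1) * v i = -(grassMul K i * v (i + 3)) ∧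
      (v i * v i) * v (i + 1) - v (i + 1) * (v i * v i) = -(v (i + 3)) ∧
      v i * v (i + 2) + v (i + 2) * v i
        = -(grassMul K i * grassMul K (i + 1) * grassMul K (i + 2) * v (i + 5)) := by
  have hcar := canonicalAnticommutation_grassMul hd hd1 hdd
  exact stmt_16_general (isPivotFamily_grassMul hcar hv hv0)
end
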